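/- (Two-sided control under the head condition, frequentist version of Theorem 4(ii).) Let 0 < τ < H₀, n₀ ≥ 1, and let A satisfy 1 + τ < A < 1 + H₀; set α = f_o(A,τ) and β = g_o(A,H₀). Then α > 0, β > 0, and for every θ in the head class ℋ(τ,H₀,n₀) and all integers n₁ ≥ n₀ and n₂ ≥ 1: P_θ({x : ∃ d ≥ 1 with (d < d_τ(θ) − n₁ or d > d_τ(θ) + n₂) and crit_A(x,d) ≤ crit_A(x,d_τ(θ))}) ≤ e^{−αn₂}/(1−e^{−α}) + e^{−βn₁}/(1−e^{−β}). -/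

import Mathlib

open MeasureTheory ProbabilityTheory

noncomputable section

/-- Tail sum `∑_{i>d} θ_i²` (indices `i = 1,2,…`). -/
def tailSum (θ : ℕ → ℝ) (d : ℕ) : ℝ := ∑' i : ℕ, if d < i then θ i ^ 2 else 0

/-- The τ-quantization error `r_τ(d,θ) = ∑_{i>d} θ_i² + τ d ε²`. -/
def rErr (ε τ : ℝ) (θ : ℕ → ℝ) (d : ℕ) : ℝ := tailSum θ d + τ * d * ε ^ 2

/-- The local effective τ-dimension: the smallest `d ≥ 1` minimizing `r_τ(·,θ)` over `d ≥ 1`. -/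
def effDim (ε τ : ℝ) (θ : ℕ → ℝ) : ℕ :=
  sInf {d : ℕ | 1 ≤ d ∧ ∀ d' : ℕ, 1 ≤ d' → rErr ε τ θ d ≤ rErr ε τ θ d'}

/-- The penalized criterion `crit_A(x,d) = -∑_{i=1}^d x_i² + A ε² d`. -/
def critF (ε A : ℝ) (x : ℕ → ℝ) (d : ℕ) : ℝ :=
  -(∑ i ∈ Finset.Icc 1 d, x i ^ 2) + A * ε ^ 2 * d

/-- `f(h,a,t) = (1/2)(a h + log(1-h) - t h/(1-h))`. -/
def fFun (h a t : ℝ) : ℝ := (a * h + Real.log (1 - h) - t * h / (1 - h)) / 2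

/-- `g(h,a,t) = f(-h,a,t)`. -/
def gFun (h a t : ℝ) : ℝ := fFun (-h) a t

/-- `f_o(a,t) = sup_{h ∈ [0,1)} f(h,a,t)`. -/
def fSup (a t : ℝ) : ℝ := sSup ((fun h => fFun h a t) '' Set.Ico 0 1)

/-- `g_o(a,t) = sup_{h ∈ [0,1]} g(h,a,t)`. -/
def gSup (a t : ℝ) : ℝ := sSup ((fun h => gFun h a t) '' Set.Icc 0 1)

/-- `P` is the infinite product measure `⨂_{i≥1} N(θ_i, ε²)` on the sequence space `ℝ^ℕ`,
characterized by being a probability measure whose finite-dimensional projections onto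
the coordinates `1,…,n` are the corresponding finite products of Gaussians. -/
def IsGaussianProduct (ε : ℝ) (θ : ℕ → ℝ) (P : Measure (ℕ → ℝ)) : Prop :=
  IsProbabilityMeasure P ∧
  ∀ n : ℕ, P.map (fun x (i : Fin n) => x ((i : ℕ) + 1)) =
    Measure.pi fun i : Fin n => gaussianReal (θ ((i : ℕ) + 1)) ((ε ^ 2).toNNReal)

/-!
A sum `∑_{i ∈ s} X_i²` of squares of independent `N(m_i, v)` variables has an explicit moment
generating function. Applying Chernoff's inequality to it with the parameter `h / (2v)`, `h < 1`,
turns a bound `t v #s` on `∑_{i ∈ s} m_i²` into the deviation bound `exp (-#s f(h, a, t))` at the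
threshold `a v #s`. Optimizing over `0 ≤ h < 1` (upper deviations) and over `-1 ≤ h ≤ 0` (lower
deviations) gives the rates `f_o` and `g_o`, whose positivity comes from `log (1 - h) ≥ 1 - 1/(1-h)`
for `h` close to `0`.

Between `D = d_τ(θ)` and `d`, the criterion varies by such a sum over the block of coordinates
separating `D` from `d`. Beyond `D`, minimality of `D` bounds the energy of `θ` on every block by
`τ ε²` per coordinate; before `D`, the head condition bounds it from below by `H₀ ε²` per
coordinate. Summing the deviation bounds over `d` gives two geometric series.
-/

open Filter Finset Topology
open scoped NNReal

section RateFunctions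

variable {a h t : ℝ}

lemma mul_sub_div_le_two_mul_fFun (a t : ℝ) (hh : h < 1) :
    h * (a - (1 + t) / (1 - h)) ≤ 2 * fFun h a t := by
  have h_pos : 0 < 1 - h := sub_pos.2 hh
  calc h * (a - (1 + t) / (1 - h)) = a * h + (1 - (1 - h)⁻¹) - t * h / (1 - h) := by
        field_simp
        ring
    _ ≤ a * h + Real.log (1 - h) - t * h / (1 - h) := by
        gcongr
        exact Real.one_sub_inv_le_log_of_pos h_pos
    _ = 2 * fFun h a t := by rw [fFun, mul_div_cancel₀ _ two_ne_zero]

lemma tendsto_one_add_div_one_sub (t : ℝ) :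
    Tendsto (fun h : ℝ => (1 + t) / (1 - h)) (𝓝 0) (𝓝 (1 + t)) := by
  have h_cont : ContinuousAt (fun h : ℝ => (1 + t) / (1 - h)) 0 :=
    continuousAt_const.div (by fun_prop) (by norm_num)
  simpa using h_cont.tendsto

lemma eventually_nhdsGT_fFun_pos (hta : 1 + t < a) : ∀ᶠ h in 𝓝[>] 0, 0 < fFun h a t := by
  have h_lt := (tendsto_one_add_div_one_sub t).eventually_lt_const hta
  filter_upwards [h_lt.filter_mono nhdsWithin_le_nhds, Ioo_mem_nhdsGT one_pos] with h h_lt hh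
  have := mul_pos hh.1 (sub_pos.2 h_lt)
  linarith [mul_sub_div_le_two_mul_fFun a t hh.2]

lemma eventually_nhdsLT_fFun_pos (hat : a < 1 + t) : ∀ᶠ h in 𝓝[<] 0, 0 < fFun h a t := by
  have h_gt := (tendsto_one_add_div_one_sub t).eventually_const_lt hat
  filter_upwards [h_gt.filter_mono nhdsWithin_le_nhds, self_mem_nhdsWithin] with h h_gt hh
  have := mul_pos_of_neg_of_neg hh (sub_neg.2 h_gt)
  linarith [mul_sub_div_le_two_mul_fFun a t (hh.trans one_pos)]

lemma fFun_le_abs_div_two (a : ℝ) (ht : 0 ≤ t) (h₀ : 0 ≤ h) (h₁ : h < 1) :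
    fFun h a t ≤ |a| / 2 := by
  have h_lin : a * h ≤ |a| :=
    calc a * h ≤ |a| * h := by gcongr; exact le_abs_self a
      _ ≤ |a| := mul_le_of_le_one_right (abs_nonneg a) h₁.le
  have h_log : Real.log (1 - h) ≤ 0 := Real.log_nonpos (by linarith) (by linarith)
  have h_div : 0 ≤ t * h / (1 - h) := div_nonneg (by positivity) (by linarith)
  rw [fFun]
  gcongr
  linarith

lemma bddAbove_image_fFun (a : ℝ) (ht : 0 ≤ t) :
    BddAbove ((fun h => fFun h a t) '' Set.Ico 0 1) :=
  ⟨|a| / 2, Set.forall_mem_image.2 fun _ hh => fFun_le_abs_div_two a ht hh.1 hh.2⟩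

lemma bddAbove_image_gFun (a t : ℝ) : BddAbove ((fun h => gFun h a t) '' Set.Icc 0 1) := by
  refine isCompact_Icc.bddAbove_image fun h hh => ContinuousAt.continuousWithinAt ?_
  have h_ne : 1 - -h ≠ 0 := by linarith [hh.1]
  unfold gFun fFun
  fun_prop (disch := exact h_ne)

lemma fSup_pos (ht : 0 ≤ t) (hta : 1 + t < a) : 0 < fSup a t := by
  obtain ⟨h, h_pos, hh⟩ :=
    ((eventually_nhdsGT_fFun_pos hta).and (Ioo_mem_nhdsGT one_pos)).exists
  exact h_pos.trans_le
    (le_csSup (bddAbove_image_fFun a ht) (Set.mem_image_of_mem _ (Set.Ioo_subset_Ico_self hh)))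

lemma gSup_pos (hat : a < 1 + t) : 0 < gSup a t := by
  obtain ⟨h, h_pos, hh⟩ :=
    ((eventually_nhdsLT_fFun_pos hat).and (Ioo_mem_nhdsLT neg_one_lt_zero)).exists
  refine h_pos.trans_le (le_csSup (bddAbove_image_gFun a t) ⟨-h, ?_, by simp [gFun]⟩)
  exact ⟨by linarith [hh.2], by linarith [hh.1]⟩

lemma le_exp_neg_mul_sSup {S : Set ℝ} {p c : ℝ} (hS : S.Nonempty) (hS' : BddAbove S)
    (hp : ∀ s ∈ S, p ≤ Real.exp (-(c * s))) : p ≤ Real.exp (-(c * sSup S)) := by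
  have h_closed : IsClosed {s : ℝ | p ≤ Real.exp (-(c * s))} :=
    isClosed_le continuous_const (by fun_prop)
  exact closure_minimal hp h_closed (csSup_mem_closure hS hS')

end RateFunctions

section GaussianSquares

lemma exp_mul_sq_mul_gaussianPDFReal (m x : ℝ) {v : ℝ≥0} {r : ℝ} (hv : v ≠ 0)
    (hr : 2 * r * v < 1) :
    Real.exp (r * x ^ 2) * gaussianPDFReal m v x =
      Real.exp (r * m ^ 2 / (1 - 2 * r * v)) / √(1 - 2 * r * v) *
        gaussianPDFReal (m / (1 - 2 * r * v)) (v / (1 - 2 * r * v).toNNReal) x := by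
  have hr' : 0 < 1 - 2 * r * v := sub_pos.2 hr
  obtain ⟨q, hq⟩ : ∃ q, q = 1 - 2 * r * v := ⟨_, rfl⟩
  rw [← hq] at hr' ⊢
  have h_exponent : r * x ^ 2 + -(x - m) ^ 2 / (2 * v) =
      r * m ^ 2 / q + -(x - m / q) ^ 2 / (2 * (v / q)) := by
    obtain rfl : r = (1 - q) / (2 * v) := by rw [hq]; field_simp; ring
    field_simp
    ring
  simp only [gaussianPDFReal, NNReal.coe_div, Real.coe_toNNReal q hr'.le]
  rw [← mul_div_assoc, Real.sqrt_div (by positivity)]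
  calc Real.exp (r * x ^ 2) * ((√(2 * Real.pi * v))⁻¹ * Real.exp (-(x - m) ^ 2 / (2 * v)))
      = (√(2 * Real.pi * v))⁻¹ * Real.exp (r * x ^ 2 + -(x - m) ^ 2 / (2 * v)) := by
        rw [Real.exp_add]; ring
    _ = (√(2 * Real.pi * v))⁻¹ *
          (Real.exp (r * m ^ 2 / q) * Real.exp (-(x - m / q) ^ 2 / (2 * (v / q)))) := by
        rw [h_exponent, Real.exp_add]
    _ = _ := by field_simp

lemma mgf_sq_gaussianReal (m : ℝ) (v : ℝ≥0) {r : ℝ} (hr : 2 * r * v < 1) :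
    mgf (fun x => x ^ 2) (gaussianReal m v) r =
      Real.exp (r * m ^ 2 / (1 - 2 * r * v)) / √(1 - 2 * r * v) := by
  rcases eq_or_ne v 0 with rfl | hv
  · simp [mgf, gaussianReal_zero_var]
  have hv' : v / (1 - 2 * r * v).toNNReal ≠ 0 := by simp [hv, hr]
  simp_rw [mgf, integral_gaussianReal_eq_integral_smul hv, smul_eq_mul,
    mul_comm (gaussianPDFReal _ _ _), exp_mul_sq_mul_gaussianPDFReal m _ hv hr]
  rw [integral_const_mul, integral_gaussianPDFReal_eq_one _ hv', mul_one]

variable {ι Ω : Type*} [MeasurableSpace Ω] {μ : Measure Ω} {X : ι → Ω → ℝ} {m : ι → ℝ} {v : ℝ≥0}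

lemma mgf_sum_sq (hX : iIndepFun X μ) (hlaw : ∀ i, HasLaw (X i) (gaussianReal (m i) v) μ)
    (s : Finset ι) {r : ℝ} (hr : 2 * r * v < 1) :
    mgf (fun ω => ∑ i ∈ s, X i ω ^ 2) μ r =
      Real.exp (r * (∑ i ∈ s, m i ^ 2) / (1 - 2 * r * v)) / √(1 - 2 * r * v) ^ #s := by
  have h_indep : iIndepFun (fun i ω => X i ω ^ 2) μ :=
    hX.comp (fun _ x => x ^ 2) fun _ => by fun_prop
  have h_meas (i : ι) : AEMeasurable (fun ω => X i ω ^ 2) μ := (hlaw i).aemeasurable.pow_const 2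
  have h_mgf (i : ι) : mgf (fun ω => X i ω ^ 2) μ r =
      Real.exp (r * m i ^ 2 / (1 - 2 * r * v)) / √(1 - 2 * r * v) := by
    rw [← mgf_sq_gaussianReal (m i) v hr, ← (hlaw i).map_eq,
      mgf_map (hlaw i).aemeasurable (by fun_prop)]
    rfl
  have h_sum := h_indep.mgf_sum₀ (t := r) h_meas s
  rw [sum_fn] at h_sum
  rw [h_sum]
  simp only [h_mgf, prod_div_distrib, ← Real.exp_sum, prod_const, mul_sum, sum_div]

lemma integrable_exp_mul_sum_sq (hX : iIndepFun X μ)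
    (hlaw : ∀ i, HasLaw (X i) (gaussianReal (m i) v) μ) (s : Finset ι) {r : ℝ}
    (hr : 2 * r * v < 1) : Integrable (fun ω => Real.exp (r * ∑ i ∈ s, X i ω ^ 2)) μ := by
  have := hX.isProbabilityMeasure
  rw [← mgf_pos_iff, mgf_sum_sq hX hlaw s hr]
  exact div_pos (Real.exp_pos _) (pow_pos (Real.sqrt_pos.2 (sub_pos.2 hr)) _)

lemma exp_mul_mgf_sum_sq_le (hX : iIndepFun X μ)
    (hlaw : ∀ i, HasLaw (X i) (gaussianReal (m i) v) μ) (hv : v ≠ 0) (s : Finset ι) (a : ℝ)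
    {h t : ℝ} (hh : h < 1) (hm : h * ∑ i ∈ s, m i ^ 2 ≤ h * (t * v * #s)) :
    Real.exp (-(h / (2 * v)) * (a * v * #s)) *
        mgf (fun ω => ∑ i ∈ s, X i ω ^ 2) μ (h / (2 * v)) ≤
      Real.exp (-(#s * fFun h a t)) := by
  have hh' : 0 < 1 - h := sub_pos.2 hh
  have h_tilt : 2 * (h / (2 * v)) * v = h := by field_simp
  have h_sqrt : √(1 - h) ^ #s = Real.exp (#s * (Real.log (1 - h) / 2)) := by
    rw [Real.exp_nat_mul, Real.exp_half, Real.exp_log hh']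
  have h_mean : h / (2 * v) * (∑ i ∈ s, m i ^ 2) / (1 - h) ≤ #s * (t * h / (1 - h)) / 2 :=
    calc h / (2 * v) * (∑ i ∈ s, m i ^ 2) / (1 - h)
        = (h * ∑ i ∈ s, m i ^ 2) / (2 * v * (1 - h)) := by field_simp
      _ ≤ h * (t * v * #s) / (2 * v * (1 - h)) := by gcongr
      _ = #s * (t * h / (1 - h)) / 2 := by field_simp
  rw [mgf_sum_sq hX hlaw s (by rwa [h_tilt]), h_tilt, h_sqrt, ← Real.exp_sub, ← Real.exp_add,
    Real.exp_le_exp]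
  calc -(h / (2 * v)) * (a * v * #s) +
        (h / (2 * v) * (∑ i ∈ s, m i ^ 2) / (1 - h) - #s * (Real.log (1 - h) / 2))
      ≤ -(h / (2 * v)) * (a * v * #s) +
        (#s * (t * h / (1 - h)) / 2 - #s * (Real.log (1 - h) / 2)) := by gcongr
    _ = -(#s * fFun h a t) := by rw [fFun]; field_simp; ring

lemma measureReal_le_sum_sq_le (hX : iIndepFun X μ)
    (hlaw : ∀ i, HasLaw (X i) (gaussianReal (m i) v) μ) (hv : v ≠ 0) (s : Finset ι) (a : ℝ)
    {t : ℝ} (ht : 0 ≤ t) (hm : ∑ i ∈ s, m i ^ 2 ≤ t * v * #s) :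
    μ.real {ω | a * v * #s ≤ ∑ i ∈ s, X i ω ^ 2} ≤ Real.exp (-(#s * fSup a t)) := by
  have := hX.isProbabilityMeasure
  refine le_exp_neg_mul_sSup ⟨_, Set.mem_image_of_mem _ (Set.left_mem_Ico.2 one_pos)⟩
    (bddAbove_image_fFun a ht) (Set.forall_mem_image.2 fun h hh => ?_)
  have h_tilt : 2 * (h / (2 * v)) * v < 1 := by field_simp; exact hh.2
  exact (measure_ge_le_exp_mul_mgf _ (div_nonneg hh.1 (by positivity))
    (integrable_exp_mul_sum_sq hX hlaw s h_tilt)).trans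
    (exp_mul_mgf_sum_sq_le hX hlaw hv s a hh.2 (mul_le_mul_of_nonneg_left hm hh.1))

lemma measureReal_sum_sq_le_le (hX : iIndepFun X μ)
    (hlaw : ∀ i, HasLaw (X i) (gaussianReal (m i) v) μ) (hv : v ≠ 0) (s : Finset ι) (a : ℝ)
    {t : ℝ} (hm : t * v * #s ≤ ∑ i ∈ s, m i ^ 2) :
    μ.real {ω | ∑ i ∈ s, X i ω ^ 2 ≤ a * v * #s} ≤ Real.exp (-(#s * gSup a t)) := by
  have := hX.isProbabilityMeasure
  refine le_exp_neg_mul_sSup ⟨_, Set.mem_image_of_mem _ (Set.left_mem_Icc.2 zero_le_one)⟩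
    (bddAbove_image_gFun a t) (Set.forall_mem_image.2 fun h hh => ?_)
  have h_nonpos : -h ≤ 0 := neg_nonpos.2 hh.1
  have h_tilt : 2 * (-h / (2 * v)) * v < 1 := by field_simp; linarith
  exact (measure_le_le_exp_mul_mgf _ (div_nonpos_of_nonpos_of_nonneg h_nonpos (by positivity))
    (integrable_exp_mul_sum_sq hX hlaw s h_tilt)).trans
    (exp_mul_mgf_sum_sq_le hX hlaw hv s a (by linarith)
      (mul_le_mul_of_nonpos_left hm h_nonpos))

end GaussianSquares

lemma measure_biUnion_ge_le_geometric {Ω : Type*} [MeasurableSpace Ω] {μ : Measure Ω}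
    {S : ℕ → Set Ω} {c : ℝ} (hc : 0 < c) (n : ℕ)
    (hS : ∀ k, n ≤ k → μ (S k) ≤ ENNReal.ofReal (Real.exp (-(k * c)))) :
    μ (⋃ k ≥ n, S k) ≤ ENNReal.ofReal (Real.exp (-c * n) / (1 - Real.exp (-c))) := by
  have h_lt : Real.exp (-c) < 1 := by simpa using hc
  have h_sum := (hasSum_geometric_of_lt_one (Real.exp_pos _).le h_lt).mul_left (Real.exp (-c * n))
  have h_exp (j : ℕ) :
      Real.exp (-((j + n : ℕ) * c)) = Real.exp (-c * n) * Real.exp (-c) ^ j := by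
    rw [← Real.exp_nat_mul, ← Real.exp_add]
    push_cast
    ring_nf
  calc μ (⋃ k ≥ n, S k) ≤ ∑' j, μ (S (j + n)) := by
        rw [Set.iUnion_ge_eq_iUnion_nat_add]
        exact measure_iUnion_le _
    _ ≤ ∑' j : ℕ, ENNReal.ofReal (Real.exp (-c * n) * Real.exp (-c) ^ j) :=
        ENNReal.tsum_le_tsum fun j => (hS _ (Nat.le_add_left n j)).trans_eq (by rw [h_exp])
    _ = ENNReal.ofReal (Real.exp (-c * n) / (1 - Real.exp (-c))) := by
        rw [← ENNReal.ofReal_tsum_of_nonneg (fun _ => by positivity) h_sum.summable,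
          h_sum.tsum_eq, div_eq_mul_inv]

section EffectiveDimension

variable {ε τ : ℝ} {θ : ℕ → ℝ}

lemma tailSum_eq_tsum_Ioi (θ : ℕ → ℝ) (d : ℕ) : tailSum θ d = ∑' i : Set.Ioi d, θ i ^ 2 := by
  rw [tsum_subtype (Set.Ioi d) fun i => θ i ^ 2]
  simp only [tailSum, Set.indicator_apply, Set.mem_Ioi]

lemma tailSum_nonneg (θ : ℕ → ℝ) (d : ℕ) : 0 ≤ tailSum θ d := by
  rw [tailSum_eq_tsum_Ioi]
  positivity

lemma sum_Ioc_add_tailSum (hθ : Summable fun i => θ i ^ 2) {a b : ℕ} (hab : a ≤ b) :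
    ∑ i ∈ Ioc a b, θ i ^ 2 + tailSum θ b = tailSum θ a := by
  have h_disj : Disjoint (Ioc a b : Set ℕ) (Set.Ioi b) := by
    rw [coe_Ioc]
    exact Set.Ioc_disjoint_Ioi_same
  have h_union : (Ioc a b : Set ℕ) ∪ Set.Ioi b = Set.Ioi a := by
    rw [coe_Ioc, Set.Ioc_union_Ioi_eq_Ioi hab]
  rw [tailSum_eq_tsum_Ioi, tailSum_eq_tsum_Ioi, ← h_union,
    Summable.tsum_union_disjoint (f := fun i => θ i ^ 2) h_disj (hθ.subtype _) (hθ.subtype _),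
    tsum_subtype' _ fun i => θ i ^ 2]

lemma tendsto_rErr_atTop (hε : ε ≠ 0) (hτ : 0 < τ) (θ : ℕ → ℝ) :
    Tendsto (rErr ε τ θ) atTop atTop := by
  have h_lin : Tendsto (fun d : ℕ => τ * d * ε ^ 2) atTop atTop :=
    (tendsto_natCast_atTop_atTop.const_mul_atTop hτ).atTop_mul_const (by positivity)
  exact tendsto_atTop_mono (fun d => le_add_of_nonneg_left (tailSum_nonneg θ d)) h_lin

lemma effDim_spec (hε : ε ≠ 0) (hτ : 0 < τ) (θ : ℕ → ℝ) :
    1 ≤ effDim ε τ θ ∧ ∀ d, 1 ≤ d → rErr ε τ θ (effDim ε τ θ) ≤ rErr ε τ θ d := by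
  have h_tendsto : Tendsto (rErr ε τ θ) cofinite atTop := by
    rw [Nat.cofinite_eq_atTop]
    exact tendsto_rErr_atTop hε hτ θ
  exact Nat.sInf_mem (h_tendsto.exists_within_forall_le (s := Set.Ici 1) ⟨1, le_rfl⟩)

lemma sum_Ioc_effDim_sq_le (hε : ε ≠ 0) (hτ : 0 < τ) (hθ : Summable fun i => θ i ^ 2) (k : ℕ) :
    ∑ i ∈ Ioc (effDim ε τ θ) (effDim ε τ θ + k), θ i ^ 2 ≤ τ * ε ^ 2 * k := by
  obtain ⟨h_one, h_min⟩ := effDim_spec hε hτ θ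
  have h_le := h_min (effDim ε τ θ + k) (h_one.trans (Nat.le_add_right _ _))
  simp only [rErr, ← sum_Ioc_add_tailSum hθ (Nat.le_add_right (effDim ε τ θ) k)] at h_le
  push_cast at h_le
  linarith

end EffectiveDimension

namespace IsGaussianProduct

variable {ε : ℝ} {θ : ℕ → ℝ} {P : Measure (ℕ → ℝ)}

lemma hasLaw_eval (hP : IsGaussianProduct ε θ P) (i : ℕ) :
    HasLaw (fun x => x (i + 1)) (gaussianReal (θ (i + 1)) (ε ^ 2).toNNReal) P where
  aemeasurable := (measurable_pi_apply (i + 1)).aemeasurable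
  map_eq := by
    have h_comp : (fun x : ℕ → ℝ => x (i + 1)) =
        Function.eval (Fin.last i) ∘ fun (x : ℕ → ℝ) (j : Fin (i + 1)) => x ((j : ℕ) + 1) := by
      ext x; simp
    rw [h_comp, ← Measure.map_map (by fun_prop) (by fun_prop), hP.2 (i + 1),
      (measurePreserving_eval _ (Fin.last i)).map_eq, Fin.val_last]

lemma iIndepFun_eval (hP : IsGaussianProduct ε θ P) :
    iIndepFun (fun (i : ℕ) (x : ℕ → ℝ) => x (i + 1)) P := by
  have := hP.1
  have h_fin (n : ℕ) : iIndepFun (fun (i : Fin n) (x : ℕ → ℝ) => x ((i : ℕ) + 1)) P := by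
    rw [iIndepFun_iff_map_fun_eq_pi_map fun i : Fin n => (hP.hasLaw_eval i).aemeasurable, hP.2 n]
    simp only [fun i => (hP.hasLaw_eval i).map_eq]
  refine iIndepFun_iff_finset.2 fun s => ?_
  obtain ⟨n, hn⟩ := s.exists_nat_subset_range
  exact (h_fin n).precomp (g := fun i : s => ⟨i, mem_range.1 (hn i.2)⟩)
    fun i j hij => Subtype.ext (Fin.mk.inj hij)

end IsGaussianProduct

section Criterion

variable {ε A t : ℝ} {θ : ℕ → ℝ} {P : Measure (ℕ → ℝ)}

lemma critF_add (ε A : ℝ) (x : ℕ → ℝ) (d k : ℕ) :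
    critF ε A x (d + k) =
      critF ε A x d + (A * ε ^ 2 * k - ∑ i ∈ Ico d (d + k), x (i + 1) ^ 2) := by
  have h_sum (n : ℕ) : ∑ i ∈ Icc 1 n, x i ^ 2 = ∑ i ∈ range n, x (i + 1) ^ 2 := by
    rw [range_eq_Ico, sum_Ico_add' (fun i => x i ^ 2), zero_add,
      Ico_add_one_right_eq_Icc]
  rw [critF, critF, h_sum, h_sum, ← sum_range_add_sum_Ico _ (Nat.le_add_right d k)]
  push_cast
  ring

lemma sum_Ioc_eq_sum_Ico_add_one {M : Type*} [AddCommMonoid M] (f : ℕ → M) (a b : ℕ) :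
    ∑ i ∈ Ioc a b, f i = ∑ i ∈ Ico a b, f (i + 1) := by
  rw [sum_Ico_add' f, Ico_add_one_add_one_eq_Ioc]

lemma measureReal_critF_add_le (hε : ε ≠ 0) (hP : IsGaussianProduct ε θ P) (A : ℝ) (ht : 0 ≤ t)
    {d k : ℕ} (hθ : ∑ i ∈ Ioc d (d + k), θ i ^ 2 ≤ t * ε ^ 2 * k) :
    P.real {x | critF ε A x (d + k) ≤ critF ε A x d} ≤ Real.exp (-(k * fSup A t)) := by
  have h_var : ((ε ^ 2).toNNReal : ℝ) = ε ^ 2 := Real.coe_toNNReal _ (sq_nonneg ε)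
  have h_card : #(Ico d (d + k)) = k := by simp
  rw [sum_Ioc_eq_sum_Ico_add_one fun i => θ i ^ 2] at hθ
  have h_tail := measureReal_le_sum_sq_le hP.iIndepFun_eval hP.hasLaw_eval (by positivity)
    (Ico d (d + k)) A ht (by rwa [h_var, h_card])
  simpa only [critF_add, add_le_iff_nonpos_right, sub_nonpos, h_var, h_card] using h_tail

lemma measureReal_critF_le_add (hε : ε ≠ 0) (hP : IsGaussianProduct ε θ P) (A : ℝ)
    {d k : ℕ} (hθ : t * ε ^ 2 * k ≤ ∑ i ∈ Ioc d (d + k), θ i ^ 2) :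
    P.real {x | critF ε A x d ≤ critF ε A x (d + k)} ≤ Real.exp (-(k * gSup A t)) := by
  have h_var : ((ε ^ 2).toNNReal : ℝ) = ε ^ 2 := Real.coe_toNNReal _ (sq_nonneg ε)
  have h_card : #(Ico d (d + k)) = k := by simp
  rw [sum_Ioc_eq_sum_Ico_add_one fun i => θ i ^ 2] at hθ
  have h_tail := measureReal_sum_sq_le_le hP.iIndepFun_eval hP.hasLaw_eval (by positivity)
    (Ico d (d + k)) A (by rwa [h_var, h_card])
  simpa only [critF_add, le_add_iff_nonneg_right, sub_nonneg, h_var, h_card] using h_tail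

lemma measure_exists_ge_critF_le (hε : ε ≠ 0) (hP : IsGaussianProduct ε θ P) (ht : 0 ≤ t)
    (htA : 1 + t < A) (D n : ℕ)
    (hθ : ∀ k, n ≤ k → ∑ i ∈ Ioc D (D + k), θ i ^ 2 ≤ t * ε ^ 2 * k) :
    P {x | ∃ d, D + n ≤ d ∧ critF ε A x d ≤ critF ε A x D} ≤
      ENNReal.ofReal (Real.exp (-fSup A t * n) / (1 - Real.exp (-fSup A t))) := by
  have := hP.1
  refine (measure_mono ?_).trans (measure_biUnion_ge_le_geometric (fSup_pos ht htA) n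
    (S := fun k => {x | critF ε A x (D + k) ≤ critF ε A x D}) fun k hk => ?_)
  · rintro x ⟨d, hd, hx⟩
    refine Set.mem_iUnion₂.2 ⟨d - D, by lia, ?_⟩
    rwa [Set.mem_ofPred_eq, Nat.add_sub_cancel' (by lia)]
  · rw [← ofReal_measureReal]
    exact ENNReal.ofReal_le_ofReal (measureReal_critF_add_le hε hP A ht (hθ k hk))

lemma measure_exists_le_critF_le (hε : ε ≠ 0) (hP : IsGaussianProduct ε θ P)
    (hAt : A < 1 + t) (D n : ℕ)
    (hθ : ∀ k, n ≤ k → k ≤ D → t * ε ^ 2 * k ≤ ∑ i ∈ Icc (D - k + 1) D, θ i ^ 2) :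
    P {x | ∃ d, d + n ≤ D ∧ critF ε A x d ≤ critF ε A x D} ≤
      ENNReal.ofReal (Real.exp (-gSup A t * n) / (1 - Real.exp (-gSup A t))) := by
  have := hP.1
  refine (measure_mono ?_).trans (measure_biUnion_ge_le_geometric (gSup_pos hAt) n
    (S := fun k => {x | k ≤ D ∧ critF ε A x (D - k) ≤ critF ε A x D}) fun k hk => ?_)
  · rintro x ⟨d, hd, hx⟩
    refine Set.mem_iUnion₂.2 ⟨D - d, by lia, Nat.sub_le D d, ?_⟩
    rwa [Nat.sub_sub_self (by lia)]
  · by_cases hkD : k ≤ D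
    · have h_block := hθ k hk hkD
      obtain ⟨d, rfl⟩ := Nat.exists_eq_add_of_le' hkD
      rw [Nat.add_sub_cancel, Icc_add_one_left_eq_Ioc] at h_block
      simp only [hkD, true_and, Nat.add_sub_cancel]
      rw [← ofReal_measureReal]
      exact ENNReal.ofReal_le_ofReal (measureReal_critF_le_add hε hP A h_block)
    · simp [hkD]

end Criterion

theorem stmt16 (ε τ H₀ A : ℝ) (hε : 0 < ε) (hτ : 0 < τ) (hτH : τ < H₀)
    (n₀ : ℕ) (hn₀ : 1 ≤ n₀) (hA1 : 1 + τ < A) (hA2 : A < 1 + H₀) :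
    0 < fSup A τ ∧ 0 < gSup A H₀ ∧
    ∀ θ : ℕ → ℝ, Summable (fun i => θ i ^ 2) →
    (∀ d : ℕ, n₀ ≤ d → d ≤ effDim ε τ θ →
      H₀ * ε ^ 2 * d ≤ ∑ i ∈ Finset.Icc (effDim ε τ θ - d + 1) (effDim ε τ θ), θ i ^ 2) →
    ∀ n₁ n₂ : ℕ, n₀ ≤ n₁ → 1 ≤ n₂ →
    ∀ P : Measure (ℕ → ℝ), IsGaussianProduct ε θ P →
    P {x | ∃ d : ℕ, 1 ≤ d ∧ (d + n₁ < effDim ε τ θ ∨ effDim ε τ θ + n₂ < d) ∧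
        critF ε A x d ≤ critF ε A x (effDim ε τ θ)} ≤
      ENNReal.ofReal (Real.exp (-(fSup A τ) * n₂) / (1 - Real.exp (-(fSup A τ))) +
        Real.exp (-(gSup A H₀) * n₁) / (1 - Real.exp (-(gSup A H₀)))) := by
  have h_fSup := fSup_pos hτ.le hA1
  have h_gSup := gSup_pos hA2
  refine ⟨h_fSup, h_gSup, fun θ hθ h_head n₁ n₂ hn₁ _ P hP => ?_⟩
  have h_nonneg {c : ℝ} (hc : 0 < c) (n : ℕ) : 0 ≤ Real.exp (-c * n) / (1 - Real.exp (-c)) :=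
    div_nonneg (Real.exp_nonneg _) (by simpa using hc.le)
  rw [ENNReal.ofReal_add (h_nonneg h_fSup n₂) (h_nonneg h_gSup n₁)]
  refine (measure_mono ?_).trans ((measure_union_le _ _).trans (add_le_add
    (measure_exists_ge_critF_le hε.ne' hP hτ.le hA1 (effDim ε τ θ) n₂
      fun k _ => sum_Ioc_effDim_sq_le hε.ne' hτ hθ k)
    (measure_exists_le_critF_le hε.ne' hP hA2 (effDim ε τ θ) n₁
      fun k hk => h_head k (hn₁.trans hk))))
  rintro x ⟨d, -, h_lt | h_gt, h_crit⟩
  · exact Or.inr ⟨d, h_lt.le, h_crit⟩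
  · exact Or.inl ⟨d, h_gt.le, h_crit⟩
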